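/- arXiv:1504.00728 — 4 statements merged into one kernel-verified Lean document; each statement's English description precedes it below -/
import Mathlib

section
/- Let A, B, D ∈ ℂ and define g(y,z) = z·(A(y⁴z² + √−1·z⁴ − z² − √−1·y⁴) + B(y⁴z + √−1·y²z³ − z³ − √−1·y²z) + D(y³z² + √−1·yz³ − yz² − √−1·y³z)). Then for all w, y, z ∈ ℂ with y ≠ 0 and z ≠ 0, if w² = g(y,z), then (ζ₈·y³·w/z⁴)² = g(y/z, y²/z), where ζ₈ = (1+√−1)/√2. In other words, the hypersurface {w² = g(y,z)} is invariant under the map σ₂ : (w,y,z) ↦ (ζ₈·y³·w/z⁴, y/z, y²/z). -/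
/-- The Enriques surface equation of Example 1.2 is invariant under the order-8 map
`σ₂ : (w, y, z) ↦ (ζ₈·y³·w/z⁴, y/z, y²/z)` where `ζ₈ = (1+√-1)/√2`. -/
theorem stmt_4 (A B D : ℂ) (g : ℂ → ℂ → ℂ)
    (hg : ∀ y z : ℂ, g y z =
      z * (A * (y ^ 4 * z ^ 2 + Complex.I * z ^ 4 - z ^ 2 - Complex.I * y ^ 4) +
        B * (y ^ 4 * z + Complex.I * y ^ 2 * z ^ 3 - z ^ 3 - Complex.I * y ^ 2 * z) +
        D * (y ^ 3 * z ^ 2 + Complex.I * y * z ^ 3 - y * z ^ 2 - Complex.I * y ^ 3 * z))) :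
    ∀ w y z : ℂ, y ≠ 0 → z ≠ 0 → w ^ 2 = g y z →
      ((1 + Complex.I) / Real.sqrt 2 * y ^ 3 * w / z ^ 4) ^ 2 =
        g (y / z) (y ^ 2 / z) := by
  intro w y z hy hz hw
  have hs : ((Real.sqrt 2 : ℝ) : ℂ) ^ 2 = 2 := by
    rw [← Complex.ofReal_pow, Real.sq_sqrt (by norm_num)]
    norm_num
  have hI : Complex.I ^ 2 = -1 := Complex.I_sq
  have hl : ((1 + Complex.I) / Real.sqrt 2 * y ^ 3 * w / z ^ 4) ^ 2 =
      Complex.I * y ^ 6 * w ^ 2 / z ^ 8 := by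
    have h1 : ((1 + Complex.I) / Real.sqrt 2) ^ 2 = Complex.I := by
      rw [div_pow, hs]
      linear_combination hI / 2
    rw [div_pow, mul_pow, mul_pow, h1]
    ring
  rw [hl, hw, hg, hg]
  generalize Complex.I = i at *
  have h3 : i * y ^ 6 * (z * (A * (y ^ 4 * z ^ 2 + i * z ^ 4 - z ^ 2 - i * y ^ 4) +
        B * (y ^ 4 * z + i * y ^ 2 * z ^ 3 - z ^ 3 - i * y ^ 2 * z) +
        D * (y ^ 3 * z ^ 2 + i * y * z ^ 3 - y * z ^ 2 - i * y ^ 3 * z))) =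
      y ^ 6 * (z * (A * (i * y ^ 4 * z ^ 2 - z ^ 4 - i * z ^ 2 + y ^ 4) +
        B * (i * y ^ 4 * z - y ^ 2 * z ^ 3 - i * z ^ 3 + y ^ 2 * z) +
        D * (i * y ^ 3 * z ^ 2 - y * z ^ 3 - i * y * z ^ 2 + y ^ 3 * z))) := by
    linear_combination (y ^ 6 * z * (A * (z ^ 4 - y ^ 4) + B * (y ^ 2 * z ^ 3 - y ^ 2 * z) +
      D * (y * z ^ 3 - y ^ 3 * z))) * hI
  rw [h3]
  field_simp
  ring
end

section
/- Let σ₂ be the map (w,y,z) ↦ (ζ₈·y³·w/z⁴, y/z, y²/z) and σ₁ the map (w,y,z) ↦ (√−1·w/(y²z³), 1/y, 1/z), both on the set T = {(w,y,z) ∈ ℂ³ : w ≠ 0, y ≠ 0, z ≠ 0}, where ζ₈ = (1+√−1)/√2. Then σ₂ maps T to itself, σ₂(σ₂(w,y,z)) = σ₁(w,y,z) for all (w,y,z) ∈ T, the eighth iterate of σ₂ is the identity on T, and the fourth iterate of σ₂ equals (w,y,z) ↦ (−w,y,z), which is not the identity. Hence σ₂ has order exactly 8 as a permutation of T. -/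
/-- The map `σ₂ : (w, y, z) ↦ (ζ₈·y³·w/z⁴, y/z, y²/z)`, where `ζ₈ = (1+√-1)/√2`. -/
noncomputable def sigma2 : ℂ × ℂ × ℂ → ℂ × ℂ × ℂ :=
  fun p => ((1 + Complex.I) / Real.sqrt 2 * p.2.1 ^ 3 * p.1 / p.2.2 ^ 4,
    p.2.1 / p.2.2, p.2.1 ^ 2 / p.2.2)

/-- The map `σ₁ : (w, y, z) ↦ (√-1·w/(y²z³), 1/y, 1/z)`. -/
noncomputable def sigma1 : ℂ × ℂ × ℂ → ℂ × ℂ × ℂ :=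
  fun p => (Complex.I * p.1 / (p.2.1 ^ 2 * p.2.2 ^ 3), 1 / p.2.1, 1 / p.2.2)

/-- The set `T = {(w,y,z) ∈ ℂ³ : w ≠ 0, y ≠ 0, z ≠ 0}`. -/
def Tset : Set (ℂ × ℂ × ℂ) := {p | p.1 ≠ 0 ∧ p.2.1 ≠ 0 ∧ p.2.2 ≠ 0}

theorem aux_zeta : ((1 + Complex.I) / (Real.sqrt 2 : ℂ)) ^ 2 = Complex.I := by
  have h : ((Real.sqrt 2 : ℝ) : ℂ) ^ 2 = 2 := by
    rw [← Complex.ofReal_pow, Real.sq_sqrt (by norm_num)]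
    norm_num
  rw [div_pow, h, add_sq, Complex.I_sq]
  ring

theorem aux_zeta_ne : ((1 + Complex.I) / (Real.sqrt 2 : ℂ)) ≠ 0 := by
  intro h
  have h2 := aux_zeta
  rw [h] at h2
  exact Complex.I_ne_zero (by rw [← h2]; norm_num)

theorem aux_maps (p : ℂ × ℂ × ℂ) (hp : p ∈ Tset) : sigma2 p ∈ Tset := by
  obtain ⟨h1, h2, h3⟩ := hp
  exact ⟨div_ne_zero (mul_ne_zero (mul_ne_zero aux_zeta_ne (pow_ne_zero _ h2)) h1)
    (pow_ne_zero _ h3), div_ne_zero h2 h3, div_ne_zero (pow_ne_zero _ h2) h3⟩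

theorem aux_sq (w y z : ℂ) (hp : (w, y, z) ∈ Tset) :
    sigma2 (sigma2 (w, y, z)) = sigma1 (w, y, z) := by
  obtain ⟨h1, h2, h3⟩ := hp
  simp only at h1 h2 h3
  have hz := aux_zeta
  simp only [sigma2, sigma1, Prod.mk.injEq]
  generalize (1 + Complex.I) / (Real.sqrt 2 : ℂ) = t at hz ⊢
  rw [← hz]
  refine ⟨?_, ?_, ?_⟩ <;> field_simp

theorem aux_four (w y z : ℂ) (hp : (w, y, z) ∈ Tset) :
    sigma2^[4] (w, y, z) = (-w, y, z) := by
  have e : sigma2^[4] (w, y, z) = sigma2 (sigma2 (sigma2 (sigma2 (w, y, z)))) := rfl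
  have hq := aux_maps _ (aux_maps _ hp)
  rw [aux_sq _ _ _ hp] at hq
  rw [e, aux_sq _ _ _ hp]
  refine (aux_sq _ _ _ hq).trans ?_
  obtain ⟨h1, h2, h3⟩ := hp
  simp only at h1 h2 h3
  simp only [sigma1, Prod.mk.injEq]
  refine ⟨?_, ?_, ?_⟩
  · field_simp
    rw [Complex.I_sq]
  · field_simp
  · field_simp

/-- `σ₂` maps `T` to itself, `σ₂² = σ₁` on `T`, the eighth iterate of `σ₂` is the identity
on `T`, and the fourth iterate of `σ₂` equals `(w,y,z) ↦ (-w,y,z)`, which is not the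
identity; hence `σ₂` has order exactly 8 as a permutation of `T`. -/
theorem stmt_5 :
    (∀ p ∈ Tset, sigma2 p ∈ Tset) ∧
    (∀ w y z : ℂ, (w, y, z) ∈ Tset → sigma2 (sigma2 (w, y, z)) = sigma1 (w, y, z)) ∧
    (∀ p ∈ Tset, sigma2^[8] p = p) ∧
    (∀ w y z : ℂ, (w, y, z) ∈ Tset → sigma2^[4] (w, y, z) = (-w, y, z)) ∧
    (∀ p ∈ Tset, sigma2^[4] p ≠ p) := by
  refine ⟨aux_maps, aux_sq, ?_, aux_four, ?_⟩
  · rintro ⟨w, y, z⟩ hp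
    have hn : (-w, y, z) ∈ Tset := ⟨neg_ne_zero.mpr hp.1, hp.2⟩
    rw [show (8 : ℕ) = 4 + 4 from rfl, Function.iterate_add_apply, aux_four _ _ _ hp,
      aux_four _ _ _ hn, neg_neg]
  · rintro ⟨w, y, z⟩ hp h
    rw [aux_four _ _ _ hp] at h
    exact hp.1 (neg_eq_self.mp (Prod.mk.inj h).1)
end

section
/- Let A, B, C, D ∈ ℂ and define h(y,z) = z·(A·y⁴z² + B(y⁴ + z⁴) + C(y³z − √−1·yz³) + D·z²). Then for all w, y, z ∈ ℂ with y ≠ 0 and z ≠ 0, if w² = h(y,z), then (w·y³/z³)² = h(√−1·y, y²/z). In other words, the hypersurface {w² = h(y,z)} is invariant under the map σ₃ : (w,y,z) ↦ (w·y³/z³, √−1·y, y²/z). -/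
/-- The Enriques surface equation of Example 1.3 is invariant under the order-8 map
`σ₃ : (w, y, z) ↦ (w·y³/z³, √-1·y, y²/z)`. -/
theorem stmt_7 (A B C D : ℂ) (h : ℂ → ℂ → ℂ)
    (hh : ∀ y z : ℂ, h y z =
      z * (A * y ^ 4 * z ^ 2 + B * (y ^ 4 + z ^ 4) +
        C * (y ^ 3 * z - Complex.I * y * z ^ 3) + D * z ^ 2)) :
    ∀ w y z : ℂ, y ≠ 0 → z ≠ 0 → w ^ 2 = h y z →
      (w * y ^ 3 / z ^ 3) ^ 2 = h (Complex.I * y) (y ^ 2 / z) := by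
  intro w y z hy hz hw
  have h2 : Complex.I ^ 2 = -1 := Complex.I_sq
  have h3 : Complex.I ^ 3 = -Complex.I := by rw [pow_succ, h2]; ring
  have h4 : Complex.I ^ 4 = 1 := Complex.I_pow_four
  have h5 : Complex.I * (Complex.I * y) = -y := by
    rw [← mul_assoc, Complex.I_mul_I]; ring
  rw [hh] at hw ⊢
  rw [div_pow, mul_pow, hw, mul_pow, mul_pow, h3, h4, h5]
  field_simp
  ring
end

section
/- Let g : ℂ × ℂ → ℂ be a function satisfying, for all Y, Z ∈ ℂ with Y ≠ 0 and Z ≠ 0: (i) g(−Y,−Z) = g(Y,Z), and (ii) Z⁴·g(1/Z, Y) = √−1·g(Y,Z). Define φ(W,Y,Z) = (ζ₈·W/Z², 1/Z, Y) and ε(W,Y,Z) = (−W,−Y,−Z) on the set T' = {(W,Y,Z) ∈ ℂ³ : Y ≠ 0, Z ≠ 0}, where ζ₈ = (1+√−1)/√2. Then: (a) if W² = g(Y,Z) then the image (W',Y',Z') = φ(W,Y,Z) also satisfies W'² = g(Y',Z'); (b) φ and ε commute: φ(ε(W,Y,Z)) = ε(φ(W,Y,Z)); (c) φ(φ(W,Y,Z))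 = (√−1·W/(Y²Z²), 1/Y, 1/Z), i.e. the square of φ is the order-4 map of Example 1.1 bis; (d) the fourth iterate of φ equals (W,Y,Z) ↦ (−W,Y,Z) and the eighth iterate of φ is the identity. -/
/-- The lift `φ : (W, Y, Z) ↦ (ζ₈·W/Z², 1/Z, Y)` of Example 1.2 bis,
where `ζ₈ = (1+√-1)/√2`. -/
noncomputable def phi2bis : ℂ × ℂ × ℂ → ℂ × ℂ × ℂ :=
  fun p => ((1 + Complex.I) / Real.sqrt 2 * p.1 / p.2.2 ^ 2, 1 / p.2.2, p.2.1)

/-- The Enriques involution `ε : (W, Y, Z) ↦ (-W, -Y, -Z)`. -/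
def epsbis : ℂ × ℂ × ℂ → ℂ × ℂ × ℂ := fun p => (-p.1, -p.2.1, -p.2.2)

/-- The set `T' = {(W,Y,Z) ∈ ℂ³ : Y ≠ 0, Z ≠ 0}`. -/
def Tset' : Set (ℂ × ℂ × ℂ) := {p | p.2.1 ≠ 0 ∧ p.2.2 ≠ 0}

/-- Example 1.2 bis: if `g` satisfies `g(-Y,-Z) = g(Y,Z)` and
`Z⁴·g(1/Z,Y) = √-1·g(Y,Z)` for all nonzero `Y, Z`, then the K3 locus `W² = g(Y,Z)` is
preserved by `φ`, `φ` and `ε` commute on `T'`, the square of `φ` is the order-4 map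
`(W,Y,Z) ↦ (√-1·W/(Y²Z²), 1/Y, 1/Z)` of Example 1.1 bis, the fourth iterate of `φ`
equals `(W,Y,Z) ↦ (-W,Y,Z)`, and the eighth iterate of `φ` is the identity. -/
theorem stmt_11 (g : ℂ → ℂ → ℂ)
    (hsym : ∀ Y Z : ℂ, Y ≠ 0 → Z ≠ 0 → g (-Y) (-Z) = g Y Z)
    (hinv : ∀ Y Z : ℂ, Y ≠ 0 → Z ≠ 0 →
      Z ^ 4 * g (1 / Z) Y = Complex.I * g Y Z) :
    (∀ W Y Z : ℂ, Y ≠ 0 → Z ≠ 0 → W ^ 2 = g Y Z →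
      (phi2bis (W, Y, Z)).1 ^ 2 = g (phi2bis (W, Y, Z)).2.1 (phi2bis (W, Y, Z)).2.2) ∧
    (∀ p ∈ Tset', phi2bis (epsbis p) = epsbis (phi2bis p)) ∧
    (∀ W Y Z : ℂ, (W, Y, Z) ∈ Tset' →
      phi2bis (phi2bis (W, Y, Z)) =
        (Complex.I * W / (Y ^ 2 * Z ^ 2), 1 / Y, 1 / Z)) ∧
    (∀ W Y Z : ℂ, (W, Y, Z) ∈ Tset' → phi2bis^[4] (W, Y, Z) = (-W, Y, Z)) ∧
    (∀ p ∈ Tset', phi2bis^[8] p = p) := by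
  have hz : ((1 + Complex.I) / (Real.sqrt 2 : ℂ)) ^ 2 = Complex.I := by
    have h2 : ((Real.sqrt 2 : ℝ) : ℂ) ^ 2 = 2 := by
      rw [← Complex.ofReal_pow, Real.sq_sqrt (by norm_num)]; norm_num
    rw [div_pow, h2]
    linear_combination (1 / 2 : ℂ) * Complex.I_sq
  have h2 : ∀ W Y Z : ℂ, (W, Y, Z) ∈ Tset' →
      phi2bis (phi2bis (W, Y, Z)) =
        (Complex.I * W / (Y ^ 2 * Z ^ 2), 1 / Y, 1 / Z) := by
    rintro W Y Z ⟨hY, hZ⟩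
    simp only [phi2bis]
    refine Prod.ext ?_ rfl
    simp only
    linear_combination (W / (Y ^ 2 * Z ^ 2)) * hz
  have h4 : ∀ W Y Z : ℂ, (W, Y, Z) ∈ Tset' → phi2bis^[4] (W, Y, Z) = (-W, Y, Z) := by
    rintro W Y Z ⟨hY, hZ⟩
    change Y ≠ 0 at hY
    change Z ≠ 0 at hZ
    change phi2bis (phi2bis (phi2bis (phi2bis (W, Y, Z)))) = _
    rw [h2 W Y Z ⟨hY, hZ⟩, h2 _ _ _ ⟨one_div_ne_zero hY, one_div_ne_zero hZ⟩]
    refine Prod.ext ?_ (by simp)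
    have : Complex.I * (Complex.I * W / (Y ^ 2 * Z ^ 2)) / ((1 / Y) ^ 2 * (1 / Z) ^ 2)
        = Complex.I ^ 2 * W := by
      field_simp
    simpa using this
  refine ⟨?_, ?_, h2, h4, ?_⟩
  · intro W Y Z hY hZ h
    have hi := hinv Y Z hY hZ
    simp only [phi2bis]
    rw [div_pow, mul_pow, hz, h, ← hi]
    field_simp
  · rintro ⟨W, Y, Z⟩ _
    simp only [phi2bis, epsbis]
    refine Prod.ext ?_ (Prod.ext ?_ rfl)
    · simp only [div_eq_mul_inv, neg_sq]
      ring
    · simp only [one_div, inv_neg]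
  · rintro ⟨W, Y, Z⟩ hp
    rw [show (8 : ℕ) = 4 + 4 from rfl, Function.iterate_add_apply, h4 W Y Z hp,
      h4 (-W) Y Z hp, neg_neg]
end
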